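/- For d ≥ 3, let P ⊂ ℝ^d be the simplex with vertices 0, e₁,…,e_{d−1}, and (d+1)(e₁+⋯+e_{d−1}) + (d+2)e_d. Then the point (1,1,…,1) lies in the interior of P, so μ_Ehr(P) = d, while Box(P) consists of the single point (⌊(d+1)/2⌋+1, …, ⌊(d+1)/2⌋+1, ⌊(d+1)/2⌋) of degree ⌊(d+1)/2⌋, so μ_hole(P) = ⌊(d+1)/2⌋ < d = μ_Ehr(P). -/

import Mathlib

open scoped BigOperators Pointwise

/-- Points of `ℝ^N`. -/
abbrev Pt (N : ℕ) := Fin N → ℝ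

/-- A point has integer coordinates. -/
def IsLat {N : ℕ} (x : Pt N) : Prop := ∀ i, ∃ z : ℤ, x i = (z : ℝ)

/-- Lattice points of a set. -/
def latPts {N : ℕ} (P : Set (Pt N)) : Set (Pt N) := {x ∈ P | IsLat x}

/-- The dilated polytope `kP`. -/
def dil {N : ℕ} (k : ℕ) (P : Set (Pt N)) : Set (Pt N) := (k : ℝ) • P

/-- `α` is a sum of `k` lattice points of `P`. -/
def DecomposesIn {N : ℕ} (P : Set (Pt N)) (k : ℕ) (α : Pt N) : Prop :=
  ∃ f : Fin k → Pt N, (∀ i, f i ∈ latPts P) ∧ α = ∑ i, f i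

/-- The integer decomposition property. -/
def HasIDP {N : ℕ} (P : Set (Pt N)) : Prop :=
  ∀ k : ℕ, 0 < k → ∀ α ∈ latPts (dil k P), DecomposesIn P k α

/-- Very ampleness: decomposition holds for all sufficiently large `k`. -/
def VeryAmple {N : ℕ} (P : Set (Pt N)) : Prop :=
  ∃ k₀ : ℕ, ∀ k, k₀ ≤ k → ∀ α ∈ latPts (dil k P), DecomposesIn P k α

/-- An integral convex polytope: the convex hull of finitely many lattice points
(which include all its vertices). -/
def IsIntegralPolytope {N : ℕ} (P : Set (Pt N)) : Prop :=
  ∃ V : Finset (Pt N), (∀ v ∈ V, IsLat v) ∧ P = convexHull ℝ (V : Set (Pt N))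

/-- Dimension of a polytope: the rank of the direction of its affine span. -/
noncomputable def polyDim {N : ℕ} (P : Set (Pt N)) : ℕ :=
  Module.finrank ℝ (affineSpan ℝ P).direction

/-- Lattice points of the cone `C(P) ⊂ ℝ^{N+1}` generated by `P̃ = P × {1}`;
a point of `ℝ^{N+1}` is represented as a pair `(x, deg)`. -/
def coneLat {N : ℕ} (P : Set (Pt N)) : Set (Pt N × ℝ) :=
  {p | (∃ (m : ℕ) (c : Fin m → ℝ) (w : Fin m → Pt N),
        (∀ i, 0 ≤ c i ∧ w i ∈ P) ∧ p.1 = ∑ i, c i • w i ∧ p.2 = ∑ i, c i)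
    ∧ IsLat p.1 ∧ ∃ z : ℤ, p.2 = (z : ℝ)}

/-- The monoid `ℤ_{≥0}(P̃ ∩ ℤ^{N+1})` generated by the degree-one lattice points of the cone. -/
def genMonoid {N : ℕ} (P : Set (Pt N)) : Set (Pt N × ℝ) :=
  {p | ∃ (m : ℕ) (f : Fin m → Pt N), (∀ i, f i ∈ latPts P) ∧
        p.1 = ∑ i, f i ∧ p.2 = (m : ℝ)}

/-- `H` is the minimal Hilbert basis of the cone `C(P)`. -/
def IsMinHilbertBasis {N : ℕ} (P : Set (Pt N)) (H : Set (Pt N × ℝ)) : Prop :=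
  (H.Finite ∧ H ⊆ coneLat P ∧
      coneLat P ⊆ (AddSubmonoid.closure H : Set (Pt N × ℝ))) ∧
  ∀ H' : Set (Pt N × ℝ),
    (H'.Finite ∧ H' ⊆ coneLat P ∧
      coneLat P ⊆ (AddSubmonoid.closure H' : Set (Pt N × ℝ))) → H ⊆ H'

/-- `v` lists the vertices of an empty `d`-simplex contained in `P`. -/
def EmptySimplexIn {N : ℕ} (P : Set (Pt N)) (d : ℕ) (v : Fin (d+1) → Pt N) : Prop :=
  (∀ i, v i ∈ latPts P) ∧ AffineIndependent ℝ v ∧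
    ∀ x ∈ convexHull ℝ (Set.range v), IsLat x → x ∈ Set.range v

/-- `Box(S)` of a simplex with vertex list `v`: lattice points
`Σ rᵢ (vᵢ, 1)` with `0 ≤ rᵢ < 1`. -/
def boxSimplex {N d : ℕ} (v : Fin (d+1) → Pt N) : Set (Pt N × ℝ) :=
  {p | ∃ r : Fin (d+1) → ℝ, (∀ i, 0 ≤ r i ∧ r i < 1) ∧
      p.1 = ∑ i, r i • v i ∧ p.2 = ∑ i, r i ∧ IsLat p.1 ∧ ∃ z : ℤ, p.2 = (z : ℝ)}

/-- `Box(P)`: holes of `P`, i.e. box points of empty `d`-simplices in `P` that are not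
nonnegative integer combinations of `P̃ ∩ ℤ^{N+1}`. -/
def boxP {N : ℕ} (P : Set (Pt N)) (d : ℕ) : Set (Pt N × ℝ) :=
  (⋃ v ∈ {v : Fin (d+1) → Pt N | EmptySimplexIn P d v}, boxSimplex v) \ genMonoid P

/-- Ehrhart counting function `|nP ∩ ℤ^N|`. -/
noncomputable def ehr {N : ℕ} (P : Set (Pt N)) (n : ℕ) : ℕ := (latPts (dil n P)).ncard

/-- The `δ`-vector of a `d`-dimensional polytope, via finite differences of the
Ehrhart counting function. -/
noncomputable def deltaVec {N : ℕ} (P : Set (Pt N)) (d i : ℕ) : ℤ :=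
  ∑ j ∈ Finset.range (i+1), (-1)^j * ((d+1).choose j) * (ehr P (i - j) : ℤ)

/-- Vertex set of the simplex of Example 2.4: `0`, `e₁, …, e_{d-1}`, and
`(d+1)(e₁+⋯+e_{d-1}) + (d+2)·e_d`. -/
def Vint (d : ℕ) : Set (Pt d) :=
  {0} ∪ {x : Pt d | ∃ k : Fin d, (k : ℕ) < d - 1 ∧ x = fun l => if l = k then (1:ℝ) else 0}
    ∪ {(fun k => if (k : ℕ) < d - 1 then ((d:ℝ) + 1) else ((d:ℝ) + 2) : Pt d)}

/-- The simplex of Example 2.4. -/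
def Pint (d : ℕ) : Set (Pt d) := convexHull ℝ (Vint d)


section pint_helpers

/-- Scaled barycentric coordinate of vertex `e_i`. -/
def cA {m : ℕ} (x : Pt (m+1)) (i : Fin m) : ℝ :=
  ((m:ℝ)+3) * x i.castSucc - ((m:ℝ)+2) * x (Fin.last m)

/-- Scaled barycentric coordinate of vertex `0` (for the `k`-th dilate). -/
def cZ {m : ℕ} (k : ℝ) (x : Pt (m+1)) : ℝ :=
  ((m:ℝ)+3) * k - ((m:ℝ)+3) * (∑ i : Fin m, x i.castSucc) + ((m:ℝ)^2+2*m-1) * x (Fin.last m)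

/-- Facet description of the dilates. -/
def Qset (m : ℕ) (k : ℝ) : Set (Pt (m+1)) :=
  {x | 0 ≤ x (Fin.last m) ∧ (∀ i, 0 ≤ cA x i) ∧ 0 ≤ cZ k x}

/-- The lattice points of the simplex. -/
def lpt (m : ℕ) : Fin m ⊕ Fin 3 → Pt (m+1)
  | Sum.inl i => fun l => if l = i.castSucc then 1 else 0
  | Sum.inr 0 => 0
  | Sum.inr 1 => fun k => if (k:ℕ) < m then (m:ℝ)+2 else (m:ℝ)+3
  | Sum.inr 2 => fun _ => 1

lemma lpt_inl_c (m : ℕ) (i j : Fin m) : lpt m (Sum.inl i) j.castSucc = if j = i then 1 else 0 := by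
  simp [lpt]
lemma lpt_inl_l (m : ℕ) (i : Fin m) : lpt m (Sum.inl i) (Fin.last m) = 0 := by
  simp [lpt, Fin.ext_iff]; intro h; exact absurd h.symm (by have := i.2; omega)
lemma lpt_zero (m : ℕ) : lpt m (Sum.inr 0) = 0 := rfl
lemma lpt_w_c (m : ℕ) (j : Fin m) : lpt m (Sum.inr 1) j.castSucc = (m:ℝ)+2 := by
  simp [lpt]
lemma lpt_w_l (m : ℕ) : lpt m (Sum.inr 1) (Fin.last m) = (m:ℝ)+3 := by
  simp [lpt]
lemma lpt_u (m : ℕ) (j) : lpt m (Sum.inr 2) j = 1 := rfl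

lemma lpt_mem_V (m : ℕ) (a) (ha : a ≠ Sum.inr 2) : lpt m a ∈ Vint (m+1) := by
  rcases a with i | t
  · left; right
    exact ⟨i.castSucc, by simp, rfl⟩
  · fin_cases t
    · left; left; rfl
    · right
      ext k
      simp only [lpt, Nat.add_sub_cancel]
      push_cast
      split_ifs <;> ring
    · exact absurd rfl ha

lemma V_sub (m : ℕ) (x) (hx : x ∈ Vint (m+1)) : ∃ a, a ≠ Sum.inr 2 ∧ x = lpt m a := by
  rcases hx with (h | ⟨k, hk, rfl⟩) | h
  · exact ⟨Sum.inr 0, by simp, h⟩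
  · refine ⟨Sum.inl ⟨k, by simpa using hk⟩, by simp, ?_⟩
    ext l; simp [lpt]
  · refine ⟨Sum.inr 1, by simp, ?_⟩
    rw [h]
    ext k
    simp only [lpt, Nat.add_sub_cancel]
    push_cast
    split_ifs <;> ring

lemma cA_lin {m : ℕ} (a b : ℝ) (x y : Pt (m+1)) (i) : cA (a • x + b • y) i = a * cA x i + b * cA y i := by
  simp [cA]; ring

lemma cZ_lin {m : ℕ} (a b k l : ℝ) (x y : Pt (m+1)) :
    cZ (a * k + b * l) (a • x + b • y) = a * cZ k x + b * cZ l y := by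
  simp [cZ, Finset.sum_add_distrib, ← Finset.mul_sum]; ring

lemma cZ_smul {m : ℕ} (a k : ℝ) (x : Pt (m+1)) : cZ (a * k) (a • x) = a * cZ k x := by
  simpa using cZ_lin a 0 k 0 x 0

lemma cA_smul {m : ℕ} (a : ℝ) (x : Pt (m+1)) (i) : cA (a • x) i = a * cA x i := by
  simpa using cA_lin a 0 x 0 i

lemma cZ_inl (m : ℕ) (i) : cZ 1 (lpt m (Sum.inl i)) = 0 := by
  simp [cZ, lpt_inl_c, lpt_inl_l]
lemma cZ_zero (m : ℕ) : cZ 1 (lpt m (Sum.inr 0)) = m + 3 := by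
  simp [cZ, lpt_zero]
lemma cZ_w (m : ℕ) : cZ 1 (lpt m (Sum.inr 1)) = 0 := by
  simp [cZ, lpt_w_c, lpt_w_l]; ring
lemma cZ_u (m : ℕ) : cZ 1 (lpt m (Sum.inr 2)) = 2 := by
  simp [cZ, lpt_u]; ring

lemma lpt_mem_Q (m : ℕ) (a) : lpt m a ∈ Qset m 1 := by
  have hm : (0:ℝ) ≤ m := Nat.cast_nonneg m
  rcases a with i | t
  · refine ⟨by rw [lpt_inl_l], fun j => ?_, by rw [cZ_inl]⟩
    rw [cA, lpt_inl_c, lpt_inl_l]; split_ifs <;> simp; linarith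
  · fin_cases t
    · refine ⟨by simp [lpt_zero], fun j => by simp [cA, lpt_zero], ?_⟩
      show 0 ≤ cZ 1 (lpt m (Sum.inr 0))
      rw [cZ_zero]; linarith
    · refine ⟨?_, fun j => ?_, ?_⟩
      · show 0 ≤ lpt m (Sum.inr 1) _
        rw [lpt_w_l]; linarith
      · show 0 ≤ cA (lpt m (Sum.inr 1)) _
        rw [cA, lpt_w_c, lpt_w_l]; nlinarith
      · show 0 ≤ cZ 1 (lpt m (Sum.inr 1))
        rw [cZ_w]
    · refine ⟨?_, fun j => ?_, ?_⟩
      · simp [lpt]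
      · simp [cA, lpt]; norm_num
      · show 0 ≤ cZ 1 (lpt m (Sum.inr 2))
        rw [cZ_u]; norm_num

lemma Pint_eq (m : ℕ) : Pint (m+1) = Qset m 1 := by
  have hm : (0:ℝ) ≤ m := Nat.cast_nonneg m
  apply subset_antisymm
  · apply convexHull_min
    · intro x hx
      obtain ⟨a, _, rfl⟩ := V_sub m x hx
      exact lpt_mem_Q m a
    · intro x hx y hy a b ha hb hab
      obtain ⟨h1, h2, h3⟩ := hx
      obtain ⟨k1, k2, k3⟩ := hy
      refine ⟨?_, fun i => ?_, ?_⟩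
      · simp only [Pi.add_apply, Pi.smul_apply, smul_eq_mul]; positivity
      · rw [cA_lin]; have := h2 i; have := k2 i; positivity
      · have := cZ_lin a b 1 1 x y
        rw [mul_one, mul_one, hab] at this
        rw [this]; positivity
  · rintro x ⟨h1, h2, h3⟩
    let c : Fin m ⊕ Fin 2 → ℝ := Sum.elim (fun i => cA x i / (m+3)) ![cZ 1 x / (m+3), x (Fin.last m) / (m+3)]
    let p : Fin m ⊕ Fin 2 → Pt (m+1) := Sum.elim (fun i => lpt m (Sum.inl i)) ![lpt m (Sum.inr 0), lpt m (Sum.inr 1)]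
    have key : ∑ i, c i • p i ∈ Pint (m+1) := by
      apply (convex_convexHull ℝ _).sum_mem
      · rintro (i | i) _
        · exact div_nonneg (h2 i) (by linarith)
        · fin_cases i
          · exact div_nonneg h3 (by linarith)
          · exact div_nonneg h1 (by linarith)
      · simp only [c, Fintype.sum_sum_type, Sum.elim_inl, Sum.elim_inr, Fin.sum_univ_two, Matrix.cons_val_zero, Matrix.cons_val_one]
        rw [← Finset.sum_div]
        simp only [cA, cZ, Finset.sum_sub_distrib, ← Finset.mul_sum, Finset.sum_const, Finset.card_univ, Fintype.card_fin, nsmul_eq_mul]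
        field_simp
        ring
      · rintro (i | i) _
        · exact subset_convexHull ℝ _ (lpt_mem_V m (Sum.inl i) (by simp))
        · fin_cases i
          · exact subset_convexHull ℝ _ (lpt_mem_V m (Sum.inr 0) (by simp))
          · exact subset_convexHull ℝ _ (lpt_mem_V m (Sum.inr 1) (by simp))
    convert key
    ext l
    simp only [c, p, Fintype.sum_sum_type, Sum.elim_inl, Sum.elim_inr, Fin.sum_univ_two, Matrix.cons_val_zero, Matrix.cons_val_one, Finset.sum_apply, Pi.smul_apply, smul_eq_mul, lpt_zero, Pi.zero_apply]
    refine Fin.lastCases ?_ (fun j => ?_) l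
    · simp only [lpt_inl_l, lpt_w_l]
      simp
      field_simp
    · simp only [lpt_inl_c, lpt_w_c]
      simp [cA]
      field_simp
      ring

lemma dil_eq (m k : ℕ) : dil k (Pint (m+1)) = Qset m k := by
  have hm : (0:ℝ) ≤ m := Nat.cast_nonneg m
  rw [Pint_eq, dil]
  ext x
  rcases Nat.eq_zero_or_pos k with rfl | hk
  · rw [Nat.cast_zero, Set.zero_smul_set ⟨_, lpt_mem_Q m (Sum.inr 0)⟩]
    constructor
    · intro h
      rw [Set.mem_zero] at h
      subst h
      exact ⟨by simp, by simp [cA], by simp [cZ]⟩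
    · rintro ⟨h1, h2, h3⟩
      have hs : cZ 0 x + ∑ i, cA x i + x (Fin.last m) = 0 := by
        simp only [cA, cZ, Finset.sum_sub_distrib, ← Finset.mul_sum, Finset.sum_const, Finset.card_univ, Fintype.card_fin, nsmul_eq_mul]
        ring
      have h4 : 0 ≤ ∑ i, cA x i := Finset.sum_nonneg (fun i _ => h2 i)
      have h5 : ∑ i, cA x i = 0 := by linarith
      have h6 : x (Fin.last m) = 0 := by linarith
      rw [Finset.sum_eq_zero_iff_of_nonneg (fun i _ => h2 i)] at h5
      rw [Set.mem_zero]
      ext l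
      refine Fin.lastCases h6 (fun j => ?_) l
      have := h5 j (Finset.mem_univ _)
      rw [cA, h6, mul_zero, sub_zero] at this
      rcases mul_eq_zero.1 this with h | h
      · linarith
      · exact h
  · have hk' : (0:ℝ) < k := by exact_mod_cast hk
    rw [Set.mem_smul_set]
    constructor
    · rintro ⟨y, ⟨h1, h2, h3⟩, rfl⟩
      refine ⟨?_, fun i => ?_, ?_⟩
      · simp only [Pi.smul_apply, smul_eq_mul]; positivity
      · rw [cA_smul]; have := h2 i; positivity
      · have := cZ_smul (k:ℝ) 1 y
        rw [mul_one] at this; rw [this]; positivity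
    · rintro ⟨h1, h2, h3⟩
      refine ⟨(k:ℝ)⁻¹ • x, ⟨?_, fun i => ?_, ?_⟩, by rw [smul_smul, mul_inv_cancel₀ hk'.ne', one_smul]⟩
      · simp only [Pi.smul_apply, smul_eq_mul]; positivity
      · rw [cA_smul]; have := h2 i; positivity
      · have := cZ_smul (k:ℝ)⁻¹ k x
        rw [inv_mul_cancel₀ hk'.ne'] at this; rw [this]; positivity

lemma u_interior (m : ℕ) : (fun _ => (1:ℝ) : Pt (m+1)) ∈ interior (Pint (m+1)) := by
  have hm : (0:ℝ) ≤ m := Nat.cast_nonneg m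
  rw [Pint_eq, mem_interior]
  refine ⟨{x | 0 < x (Fin.last m)} ∩ (⋂ i, {x | 0 < cA x i}) ∩ {x | 0 < cZ 1 x}, ?_, ?_, ?_⟩
  · rintro x ⟨⟨h1, h2⟩, h3⟩
    rw [Set.mem_iInter] at h2
    exact ⟨le_of_lt h1, fun i => le_of_lt (h2 i), le_of_lt h3⟩
  · refine IsOpen.inter (IsOpen.inter ?_ (isOpen_iInter_of_finite fun i => ?_)) ?_
    · exact isOpen_lt (by fun_prop) (by fun_prop)
    · unfold cA; exact isOpen_lt (by fun_prop) (by fun_prop)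
    · unfold cZ; exact isOpen_lt (by fun_prop) (by fun_prop)
  · refine ⟨⟨by simp, ?_⟩, ?_⟩
    · simp [cA]; norm_num
    · have := cZ_u m
      show 0 < cZ 1 (lpt m (Sum.inr 2))
      rw [this]; norm_num

lemma lpt_lat (m : ℕ) (a) : IsLat (lpt m a) := by
  intro l
  rcases a with i | t
  · simp only [lpt]
    split_ifs
    · exact ⟨1, by simp⟩
    · exact ⟨0, by simp⟩
  · fin_cases t
    · exact ⟨0, by simp [lpt]⟩
    · simp only [lpt]
      split_ifs
      · exact ⟨m+2, by simp⟩
      · exact ⟨m+3, by simp⟩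
    · exact ⟨1, by simp [lpt]⟩

lemma lpt_mem (m : ℕ) (a) : lpt m a ∈ latPts (Pint (m+1)) :=
  ⟨by rw [Pint_eq]; exact lpt_mem_Q m a, lpt_lat m a⟩

/-- integer form of the facet description -/
lemma int_form (m : ℕ) (k : ℤ) (x : Pt (m+1)) (z : Fin (m+1) → ℤ) (hz : ∀ i, x i = z i)  :
    x ∈ Qset m k ↔ (0 ≤ z (Fin.last m) ∧
      (∀ i : Fin m, 0 ≤ ((m:ℤ)+3) * (z i.castSucc - z (Fin.last m)) + z (Fin.last m)) ∧
      0 ≤ ((m:ℤ)+3) * (k - (∑ i : Fin m, (z i.castSucc - z (Fin.last m))) - z (Fin.last m))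
        + 2 * z (Fin.last m)) := by
  have hZ : cZ (k:ℝ) x = (((m:ℤ)+3) * (k - (∑ i : Fin m, (z i.castSucc - z (Fin.last m))) - z (Fin.last m))
        + 2 * z (Fin.last m) : ℤ) := by
    simp only [cZ, hz, Finset.sum_sub_distrib, Finset.sum_const, Finset.card_univ, Fintype.card_fin, nsmul_eq_mul]
    push_cast
    ring
  have hA : ∀ i, cA x i = (((m:ℤ)+3) * (z i.castSucc - z (Fin.last m)) + z (Fin.last m) : ℤ) := by
    intro i
    simp only [cA, hz]
    push_cast
    ring
  unfold Qset
  simp only [Set.mem_ofPred_eq, hZ, hA, hz]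
  norm_cast

lemma lat_class (m : ℕ) (hm : 2 ≤ m) (x) (hx : x ∈ latPts (Pint (m+1))) : ∃ a, x = lpt m a := by
  obtain ⟨hP, hl⟩ := hx
  choose z hz using hl
  rw [Pint_eq] at hP
  have := (int_form m 1 x z hz).1 (by exact_mod_cast hP)
  set j := z (Fin.last m) with hj
  obtain ⟨h1, h2, h3⟩ := this
  obtain ⟨a, ha⟩ : ∃ a : Fin m → ℤ, ∀ i, a i = z i.castSucc - j := ⟨_, fun _ => rfl⟩
  simp only [← ha] at h2 h3
  have hxl : x (Fin.last m) = j := hz _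
  have hxc : ∀ i : Fin m, x i.castSucc = a i + j := fun i => by rw [hz, ha]; push_cast; ring
  have hm' : (2:ℤ) ≤ m := by exact_mod_cast hm
  set S := ∑ i, a i with hS
  have hsum : 0 ≤ ((m:ℤ)+3) * S + m * j := by
    have : ∑ i : Fin m, (((m:ℤ)+3) * a i + j) = ((m:ℤ)+3) * S + m * j := by
      rw [Finset.sum_add_distrib, ← Finset.mul_sum]; simp [hS]
    rw [← this]
    exact Finset.sum_nonneg fun i _ => h2 i
  have hjn : j ≤ m + 3 := by nlinarith
  rcases eq_or_lt_of_le h1 with h0 | h0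
  · -- j = 0
    have hnn : ∀ i, 0 ≤ a i := fun i => by
      have := h2 i; rw [← h0, add_zero] at this
      exact nonneg_of_mul_nonneg_right this (by linarith)
    by_cases hall : ∀ i, a i = 0
    · refine ⟨Sum.inr 0, ?_⟩
      ext l
      refine Fin.lastCases ?_ (fun i => ?_) l
      · rw [hxl, ← h0]; simp [lpt_zero]
      · rw [hxc, hall, ← h0]; simp [lpt_zero]
    · push Not at hall
      obtain ⟨i, hi⟩ := hall
      have hS1 : S ≤ 1 := by
        by_contra hc
        push Not at hc
        rw [← h0] at h3
        nlinarith
      have hi1 : 1 ≤ a i := by have := hnn i; omega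
      have hrest : S = a i + ∑ l ∈ Finset.univ.erase i, a l := by
        rw [Finset.add_sum_erase _ _ (Finset.mem_univ i)]
      have hr0 : 0 ≤ ∑ l ∈ Finset.univ.erase i, a l := Finset.sum_nonneg fun l _ => hnn l
      have hr1 : ∑ l ∈ Finset.univ.erase i, a l = 0 := by omega
      rw [Finset.sum_eq_zero_iff_of_nonneg (fun l _ => hnn l)] at hr1
      have hai : a i = 1 := by omega
      refine ⟨Sum.inl i, ?_⟩
      ext l
      refine Fin.lastCases ?_ (fun l => ?_) l
      · rw [hxl, ← h0, lpt_inl_l]; simp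
      · rw [hxc, ← h0, lpt_inl_c]
        split_ifs with h
        · subst h; simp [hai]
        · rw [hr1 l (by simp [h])]; simp
  · rcases eq_or_lt_of_le hjn with hn | hn
    · have hge : ∀ i, 0 ≤ a i + 1 := fun i => by
        have := h2 i
        rw [hn] at this
        have h : 0 ≤ ((m:ℤ)+3) * (a i + 1) := by linarith
        exact nonneg_of_mul_nonneg_right h (by linarith)
      have hsum1 : ∑ i, (a i + 1) = S + m := by rw [Finset.sum_add_distrib]; simp [hS]
      have hle : S + m ≤ 0 := by
        rw [hn] at h3
        have h : 0 ≤ ((m:ℤ)+3) * (-(S+m)) := by linarith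
        have := nonneg_of_mul_nonneg_right h (by linarith)
        linarith
      have h00 : ∑ i, (a i + 1) = 0 := le_antisymm (by linarith) (Finset.sum_nonneg fun l _ => hge l)
      rw [Finset.sum_eq_zero_iff_of_nonneg (fun l _ => hge l)] at h00
      refine ⟨Sum.inr 1, ?_⟩
      ext l
      refine Fin.lastCases ?_ (fun l => ?_) l
      · rw [hxl, hn, lpt_w_l]; simp
      · rw [hxc, hn, lpt_w_c]
        have : a l = -1 := by have := h00 l (Finset.mem_univ _); omega
        rw [this]; push_cast; ring
    · have hge : ∀ i, 0 ≤ a i := fun i => by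
        have := h2 i
        by_contra hc
        have : a i ≤ -1 := by omega
        nlinarith
      have hS0 : 0 ≤ S := Finset.sum_nonneg fun l _ => hge l
      have hj1 : j = 1 := by
        by_contra hc
        have : 2 ≤ j := by omega
        nlinarith
      have hS1 : S = 0 := by
        by_contra hc
        have : 1 ≤ S := by omega
        rw [hj1] at h3
        nlinarith
      rw [hS, Finset.sum_eq_zero_iff_of_nonneg (fun l _ => hge l)] at hS1
      refine ⟨Sum.inr 2, ?_⟩
      ext l
      refine Fin.lastCases ?_ (fun l => ?_) l
      · rw [hxl, hj1, lpt_u]; simp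
      · rw [hxc, hj1, lpt_u, hS1 l (Finset.mem_univ _)]; simp

lemma lpt_eq_u (m : ℕ) (a) (h : lpt m a (Fin.last m) = 1) : a = Sum.inr 2 := by
  have hm : (0:ℝ) ≤ m := Nat.cast_nonneg m
  rcases a with i | t
  · rw [lpt_inl_l] at h; norm_num at h
  · fin_cases t
    · simp [lpt] at h
    · change lpt m (Sum.inr 1) _ = 1 at h
      rw [lpt_w_l] at h; linarith
    · rfl

/-- the single box point -/
noncomputable def gpt (m : ℕ) : Pt (m+1) × ℝ :=
  ((fun _ => (((m+1+1)/2 : ℕ) : ℝ) + 1), (((m+1+1)/2 : ℕ) : ℝ))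

lemma int_zero (r : ℝ) (h0 : 0 ≤ r) (h1 : r < 1) (z : ℤ) (h : r = z) : r = 0 := by
  rw [h] at h0 h1 ⊢
  have a : 0 ≤ z := by exact_mod_cast h0
  have b : z < 1 := by exact_mod_cast h1
  have : z = 0 := by omega
  simp [this]

lemma box_coeff (m : ℕ) (p : Pt (m+1) × ℝ) (c : Fin m ⊕ Fin 3 → ℝ) (hc : ∀ a, 0 ≤ c a ∧ c a < 1)
    (h1 : p.1 = ∑ a, c a • lpt m a) (h2 : p.2 = ∑ a, c a) (hl : IsLat p.1) (hz : ∃ z : ℤ, p.2 = z)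
    (a : Fin m ⊕ Fin 3) (ha : c a = 0) (hau : a ≠ Sum.inr 2) : p = 0 ∨ p = gpt m := by
  obtain ⟨K, hK⟩ := hz
  choose z hz using hl
  have hlast : p.1 (Fin.last m) = (m+3) * c (Sum.inr 1) + c (Sum.inr 2) := by
    rw [h1]
    simp [Fintype.sum_sum_type, Fin.sum_univ_three, lpt_inl_l, lpt_w_l, lpt_zero, lpt_u]
    ring
  have hcast : ∀ i : Fin m, p.1 i.castSucc = c (Sum.inl i) + (m+2) * c (Sum.inr 1) + c (Sum.inr 2) := by
    intro i
    rw [h1]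
    simp [Fintype.sum_sum_type, Fin.sum_univ_three, lpt_inl_c, lpt_w_c, lpt_zero, lpt_u]
    ring
  have hdeg : p.2 = ∑ i, c (Sum.inl i) + (c (Sum.inr 0) + c (Sum.inr 1) + c (Sum.inr 2)) := by
    rw [h2]; simp [Fintype.sum_sum_type, Fin.sum_univ_three]
  have hb := hc (Sum.inr 1)
  have hg := hc (Sum.inr 2)
  have hα : ∀ i, c (Sum.inl i) = c (Sum.inr 1) := by
    intro i
    have e := hcast i
    rw [hz] at e hlast
    have e2 : c (Sum.inl i) - c (Sum.inr 1) = ((z i.castSucc - z (Fin.last m) : ℤ) : ℝ) := by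
      push_cast; linarith
    have hi := hc (Sum.inl i)
    have l1 : (-1 : ℝ) < ((z i.castSucc - z (Fin.last m) : ℤ) : ℝ) := by rw [← e2]; linarith
    have l2 : ((z i.castSucc - z (Fin.last m) : ℤ) : ℝ) < 1 := by rw [← e2]; linarith
    have l1' : -1 < z i.castSucc - z (Fin.last m) := by exact_mod_cast l1
    have l2' : z i.castSucc - z (Fin.last m) < 1 := by exact_mod_cast l2
    have : z i.castSucc - z (Fin.last m) = 0 := by omega
    rw [this] at e2
    simp at e2; linarith
  have hsum : ∑ i, c (Sum.inl i) = m * c (Sum.inr 1) := by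
    simp [hα]
  rw [hsum] at hdeg
  -- all coordinates are equal
  have hcoord : ∀ l, p.1 l = p.1 (Fin.last m) := by
    intro l
    refine Fin.lastCases rfl (fun i => ?_) l
    rw [hcast, hlast, hα]; ring
  have case0 : c (Sum.inr 1) = 0 → p = 0 := by
    intro hb0
    rw [hb0, hz] at hlast
    have hg0 : c (Sum.inr 2) = 0 := int_zero _ hg.1 hg.2 (z (Fin.last m)) (by linarith)
    have h00 : c (Sum.inr 0) = 0 := int_zero _ (hc _).1 (hc _).2 K (by rw [← hK, hdeg, hb0, hg0]; ring)
    ext l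
    · rw [hcoord, hz, hlast, hg0]; simp
    · rw [hdeg, hb0, hg0, h00]; simp
  rcases a with i | t
  · left; apply case0; rw [← hα i, ha]
  · fin_cases t
    · change c (Sum.inr 0) = 0 at ha
      rw [ha] at hdeg
      rw [hz] at hlast
      rw [hK] at hdeg
      have e : 2 * c (Sum.inr 1) = ((z (Fin.last m) - K : ℤ) : ℝ) := by push_cast; linarith
      have l1 : (0:ℝ) ≤ ((z (Fin.last m) - K : ℤ) : ℝ) := by rw [← e]; linarith
      have l2 : ((z (Fin.last m) - K : ℤ) : ℝ) < 2 := by rw [← e]; linarith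
      have l1' : 0 ≤ z (Fin.last m) - K := by exact_mod_cast l1
      have l2' : z (Fin.last m) - K < 2 := by exact_mod_cast l2
      rcases (by omega : z (Fin.last m) - K = 0 ∨ z (Fin.last m) - K = 1) with h | h
      · left; apply case0; rw [h] at e; simp at e; exact e
      · right
        rw [h] at e
        have hb2 : c (Sum.inr 1) = 1/2 := by push_cast at e; linarith
        rw [hb2] at hlast
        have g1 : (m:ℝ) + 3 ≤ 2 * (z (Fin.last m) : ℝ) := by linarith
        have g2 : 2 * (z (Fin.last m) : ℝ) < m + 5 := by linarith
        have g1' : (m:ℤ) + 3 ≤ 2 * z (Fin.last m) := by exact_mod_cast g1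
        have g2' : 2 * z (Fin.last m) < (m:ℤ) + 5 := by exact_mod_cast g2
        have hJ : z (Fin.last m) = (((m+1+1)/2 : ℕ) : ℤ) + 1 := by omega
        have hK' : K = (((m+1+1)/2 : ℕ) : ℤ) := by omega
        refine Prod.ext ?_ ?_
        · funext l
          rw [hcoord, hz, hJ]; simp only [gpt, Int.cast_add, Int.cast_natCast, Int.cast_one]
        · rw [hK, hK']; simp only [gpt, Int.cast_natCast]
    · left; exact case0 ha
    · exact absurd rfl hau

lemma zero_mem_gen (m : ℕ) : (0 : Pt (m+1) × ℝ) ∈ genMonoid (Pint (m+1)) :=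
  ⟨0, fun i => i.elim0, fun i => i.elim0, by simp, by simp⟩

lemma box_sub (m : ℕ) (hm : 2 ≤ m) : boxP (Pint (m+1)) (m+1) ⊆ {gpt m} := by
  classical
  rintro p ⟨hp, hng⟩
  simp only [Set.mem_iUnion, Set.mem_ofPred_eq] at hp
  obtain ⟨v, ⟨hv, hai, hemp⟩, r, hr, h1, h2, hl, hz⟩ := hp
  choose σ hσ using fun i => lat_class m hm (v i) (hv i)
  have hinj : Function.Injective σ := by
    intro i j hij
    apply hai.injective
    rw [hσ, hσ, hij]
  let c : Fin m ⊕ Fin 3 → ℝ := fun a => ∑ i, if σ i = a then r i else 0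
  have hc1 : ∀ i, c (σ i) = r i := by
    intro i
    simp only [c]
    rw [Finset.sum_eq_single i]
    · simp
    · intro j _ hj
      rw [if_neg (fun h => hj (hinj h))]
    · simp
  have hc0 : ∀ a, a ∉ Set.range σ → c a = 0 := by
    intro a ha
    apply Finset.sum_eq_zero
    intro i _
    rw [if_neg (fun h => ha ⟨i, h⟩)]
  have hc : ∀ a, 0 ≤ c a ∧ c a < 1 := by
    intro a
    by_cases ha : a ∈ Set.range σ
    · obtain ⟨i, rfl⟩ := ha
      rw [hc1]; exact hr i
    · rw [hc0 a ha]; norm_num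
  have e1 : p.1 = ∑ a, c a • lpt m a := by
    rw [h1]
    simp only [c, Finset.sum_smul, ite_smul, zero_smul]
    rw [Finset.sum_comm]
    simp [hσ]
  have e2 : p.2 = ∑ a, c a := by
    rw [h2]
    simp only [c]
    rw [Finset.sum_comm]
    simp
  have : ∃ a, a ∉ Set.range σ ∧ a ≠ Sum.inr 2 := by
    by_contra hcon
    push Not at hcon
    have hcard : Fintype.card (Fin (m+1+1)) = m + 2 := by simp
    by_cases hu : Sum.inr 2 ∈ Set.range σ
    · have hs : Function.Surjective σ := fun a => by
        by_contra h
        have := hcon a h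
        subst this
        exact h hu
      have := Fintype.card_le_of_surjective σ hs
      simp at this
    · have hall : ∀ a, a ≠ Sum.inr 2 → a ∈ Set.range σ := fun a ha => by
        by_contra h; exact ha (hcon a h)
      have hin : (fun _ => (1:ℝ) : Pt (m+1)) ∈ convexHull ℝ (Set.range v) := by
        have hu' : (fun _ => (1:ℝ) : Pt (m+1)) ∈ Pint (m+1) := interior_subset (u_interior m)
        refine convexHull_mono ?_ hu'
        intro x hx
        obtain ⟨a, ha, rfl⟩ := V_sub m x hx
        obtain ⟨i, rfl⟩ := hall a ha
        exact ⟨i, hσ i⟩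
      obtain ⟨i, hi⟩ := hemp _ hin (fun _ => ⟨1, by simp⟩)
      apply hu
      refine ⟨i, lpt_eq_u m _ ?_⟩
      rw [← hσ, hi]
  obtain ⟨a, ha, hau⟩ := this
  rcases box_coeff m p c hc e1 e2 hl hz a (hc0 a ha) hau with h | h
  · exact absurd (h ▸ zero_mem_gen m) hng
  · exact h

/-- the empty simplex carrying the hole -/
noncomputable def vs (m : ℕ) (i : Fin (m+1+1)) : Pt (m+1) :=
  lpt m (Fin.lastCases (motive := fun _ => Fin m ⊕ Fin 3) (Sum.inr 2)
    (fun j => Fin.lastCases (motive := fun _ => Fin m ⊕ Fin 3) (Sum.inr 1) (fun k => Sum.inl k) j) i)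

lemma vs_last (m : ℕ) : vs m (Fin.last _) = lpt m (Sum.inr 2) := by simp [vs]
lemma vs_w (m : ℕ) : vs m (Fin.last _).castSucc = lpt m (Sum.inr 1) := by simp [vs]
lemma vs_e (m : ℕ) (i : Fin m) : vs m i.castSucc.castSucc = lpt m (Sum.inl i) := by simp [vs]

lemma vs_sum (m : ℕ) (r : Fin (m+1+1) → ℝ) : (∑ i, r i • vs m i) (Fin.last m) =
    (m+3) * r (Fin.last _).castSucc + r (Fin.last _) ∧ ∀ i : Fin m, (∑ i, r i • vs m i) i.castSucc =
      r i.castSucc.castSucc + (m+2) * r (Fin.last _).castSucc + r (Fin.last _) := by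
  rw [Fin.sum_univ_castSucc, Fin.sum_univ_castSucc]
  simp only [vs_last, vs_w, vs_e]
  constructor
  · simp [lpt_inl_l, lpt_w_l, lpt_u]; ring
  · intro i; simp [lpt_inl_c, lpt_w_c, lpt_u]; ring

lemma vs_empty (m : ℕ) (hm : 2 ≤ m) : EmptySimplexIn (Pint (m+1)) (m+1) (vs m) := by
  refine ⟨fun i => lpt_mem m _, ?_, ?_⟩
  · rw [affineIndependent_iff_of_fintype]
    intro w hw hs
    rw [Finset.univ.weightedVSub_eq_linear_combination hw] at hs
    obtain ⟨e1, e2⟩ := vs_sum m w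
    rw [hs] at e1 e2
    simp only [Pi.zero_apply] at e1 e2
    have hα : ∀ i : Fin m, w i.castSucc.castSucc = w (Fin.last _).castSucc := fun i => by
      have := e2 i; linarith
    rw [Fin.sum_univ_castSucc, Fin.sum_univ_castSucc] at hw
    simp [hα] at hw
    have hb : w (Fin.last _).castSucc = 0 := by linarith
    have hg : w (Fin.last _) = 0 := by rw [hb] at e1; linarith
    intro i
    refine Fin.lastCases hg (fun i => ?_) i
    exact Fin.lastCases hb (fun i => by rw [hα, hb]) i
  · intro x hx hl
    have hsub : Set.range (vs m) ⊆ Pint (m+1) := by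
      rintro _ ⟨i, rfl⟩; exact (lpt_mem m _).1
    have hxP : x ∈ Pint (m+1) := convexHull_min hsub (convex_convexHull ℝ _) hx
    have hx2 : x ∈ {y : Pt (m+1) | cZ 1 y ≤ 2} := by
      refine convexHull_min ?_ ?_ hx
      · rintro _ ⟨i, rfl⟩
        rw [Set.mem_ofPred_eq]
        refine Fin.lastCases ?_ (fun i => Fin.lastCases ?_ (fun i => ?_) i) i
        · rw [vs_last, cZ_u]
        · rw [vs_w, cZ_w]; norm_num
        · rw [vs_e, cZ_inl]; norm_num
      · intro x hx y hy a b ha hb hab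
        have := cZ_lin a b 1 1 x y
        rw [mul_one, mul_one, hab] at this
        rw [Set.mem_ofPred_eq] at *
        rw [this]; nlinarith
    obtain ⟨a, rfl⟩ := lat_class m hm x ⟨hxP, hl⟩
    rcases a with i | t
    · exact ⟨_, vs_e m i⟩
    · fin_cases t
      · change cZ 1 (lpt m (Sum.inr 0)) ≤ 2 at hx2
        rw [cZ_zero] at hx2
        have hm0 : (0:ℝ) ≤ m := Nat.cast_nonneg m
        linarith
      · exact ⟨_, vs_w m⟩
      · exact ⟨_, vs_last m⟩

lemma gpt_box (m : ℕ) : gpt m ∈ boxSimplex (vs m) := by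
  let s : ℝ := (((m+1+1)/2 : ℕ) : ℝ) + 1 - (m+3)/2
  have hs : s = 0 ∨ s = 1/2 := by
    rcases Nat.even_or_odd' m with ⟨t, h | h⟩
    · right
      simp only [s]
      rw [show (m+1+1)/2 = t + 1 by omega, h]; push_cast; ring
    · left
      simp only [s]
      rw [show (m+1+1)/2 = t + 1 by omega, h]; push_cast; ring
  let r : Fin (m+1+1) → ℝ := fun i => if i = Fin.last _ then s else 1/2
  have r1 : r (Fin.last _) = s := by simp [r]
  have r2 : ∀ i, r (Fin.castSucc i) = 1/2 := fun i => by
    simp only [r]; rw [if_neg (Fin.castSucc_lt_last i).ne]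
  refine ⟨r, ?_, ?_, ?_, ?_, ?_⟩
  · intro i
    simp only [r]
    split_ifs
    · rcases hs with h | h <;> rw [h] <;> norm_num
    · norm_num
  · obtain ⟨e1, e2⟩ := vs_sum m r
    funext l
    refine Fin.lastCases ?_ (fun i => ?_) l
    · rw [e1, r1, r2]; simp only [s, gpt]; ring
    · rw [e2, r1, r2, r2]; simp only [s, gpt]; ring
  · rw [Fin.sum_univ_castSucc, Fin.sum_univ_castSucc]
    simp only [r1, r2]
    simp only [s, gpt]
    simp
    ring
  · intro i; exact ⟨(((m+1+1)/2 : ℕ) : ℤ) + 1, by simp only [gpt, Int.cast_add, Int.cast_natCast, Int.cast_one]⟩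
  · exact ⟨(((m+1+1)/2 : ℕ) : ℤ), by simp only [gpt, Int.cast_natCast]⟩

lemma cZ_sum {m b : ℕ} (f : Fin b → Pt (m+1)) : cZ (b:ℝ) (∑ i, f i) = ∑ i, cZ 1 (f i) := by
  simp only [cZ, Finset.sum_add_distrib, Finset.sum_sub_distrib, Finset.sum_apply, ← Finset.mul_sum]
  rw [Finset.sum_comm]
  simp

lemma gpt_not_gen (m : ℕ) (hm : 2 ≤ m) : gpt m ∉ genMonoid (Pint (m+1)) := by
  rintro ⟨b, f, hf, h1, h2⟩
  have hm0 : (0:ℝ) ≤ m := Nat.cast_nonneg m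
  have hb : (m+1+1)/2 = b := by simp only [gpt] at h2; exact_mod_cast h2
  have hsum := cZ_sum f
  have hg1 : ∀ l, (gpt m).1 l = (b:ℝ) + 1 := fun l => by simp only [gpt, hb]
  have hle : ∑ i, cZ 1 (f i) ≤ 1 := by
    rw [← hsum, ← h1]
    have h2b : 2 * (b:ℝ) ≤ m + 2 := by
      have : 2 * b ≤ m + 2 := by omega
      exact_mod_cast this
    simp only [cZ, hg1]
    simp
    nlinarith
  have hnn : ∀ i, 0 ≤ cZ 1 (f i) := fun i => by
    have := (hf i).1; rw [Pint_eq] at this; exact this.2.2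
  have hnnl : ∀ i, 0 ≤ f i (Fin.last m) := fun i => by
    have := (hf i).1; rw [Pint_eq] at this; exact this.1
  have hi1 : ∀ i, cZ 1 (f i) ≤ 1 := fun i =>
    (Finset.single_le_sum (f := fun i => cZ 1 (f i)) (fun j _ => hnn j) (Finset.mem_univ i)).trans hle
  have hlast : ∑ i, f i (Fin.last m) = (b:ℝ) + 1 := by
    rw [← hg1 (Fin.last m), h1, Finset.sum_apply]
  have hcl : ∀ i, f i (Fin.last m) = 0 ∨ f i (Fin.last m) = m + 3 := by
    intro i
    have hi := hi1 i
    obtain ⟨a, ha⟩ := lat_class m hm (f i) (hf i)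
    rw [ha] at hi ⊢
    rcases a with j | t
    · left; rw [lpt_inl_l]
    · fin_cases t
      · left; simp [lpt]
      · right; exact lpt_w_l m
      · change cZ 1 (lpt m (Sum.inr 2)) ≤ 1 at hi
        rw [cZ_u] at hi; norm_num at hi
  by_cases hall : ∀ i, f i (Fin.last m) = 0
  · simp only [hall, Finset.sum_const_zero] at hlast
    have : (0:ℝ) ≤ b := Nat.cast_nonneg b
    linarith
  · push Not at hall
    obtain ⟨i, hi⟩ := hall
    have h3 := (hcl i).resolve_left hi
    have h4 := Finset.single_le_sum (f := fun i => f i (Fin.last m)) (fun j _ => hnnl j) (Finset.mem_univ i)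
    simp only [h3, hlast] at h4
    have h5 : m + 3 ≤ b + 1 := by exact_mod_cast h4
    omega

lemma box_eq (m : ℕ) (hm : 2 ≤ m) : boxP (Pint (m+1)) (m+1) = {gpt m} := by
  apply subset_antisymm (box_sub m hm)
  rintro _ rfl
  refine ⟨?_, gpt_not_gen m hm⟩
  simp only [Set.mem_iUnion, Set.mem_ofPred_eq]
  exact ⟨vs m, vs_empty m hm, gpt_box m⟩

/-- degree of the `r`-th box point of the simplex -/
def bdeg (m r : ℕ) : ℕ := if 2 * r < m + 3 then r else r - 1

/-- parameter set for the lattice points of the `k`-th dilate -/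
noncomputable def Fpar (m k : ℕ) : Finset (Σ _ : ℕ, (Fin m ⊕ Fin 2) →₀ ℕ) :=
  (Finset.range (m+3)).sigma fun r =>
    if bdeg m r ≤ k then Finset.finsuppAntidiag Finset.univ (k - bdeg m r) else ∅

/-- integer coordinates -/
def phiZ (m : ℕ) (s : Σ _ : ℕ, (Fin m ⊕ Fin 2) →₀ ℕ) : Fin (m+1) → ℤ :=
  Fin.snoc (α := fun _ => ℤ) (fun i => (s.2 (Sum.inl i) + (m+2) * s.2 (Sum.inr 1) + s.1 : ℤ))
    ((m+3) * s.2 (Sum.inr 1) + s.1 : ℤ)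

/-- real point -/
def phi (m : ℕ) (s : Σ _ : ℕ, (Fin m ⊕ Fin 2) →₀ ℕ) : Pt (m+1) := fun l => (phiZ m s l : ℝ)

lemma mem_Fpar (m k r : ℕ) (a) : (⟨r, a⟩ : Σ _ : ℕ, (Fin m ⊕ Fin 2) →₀ ℕ) ∈ Fpar m k ↔
    r < m + 3 ∧ (∑ i, a (Sum.inl i)) + a (Sum.inr 0) + a (Sum.inr 1) + bdeg m r = k := by
  rw [Fpar, Finset.mem_sigma, Finset.mem_range]
  apply and_congr_right
  intro _
  dsimp only
  split_ifs with h
  · rw [Finset.mem_finsuppAntidiag]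
    simp only [Finset.subset_univ, and_true, Fintype.sum_sum_type, Fin.sum_univ_two]
    omega
  · simp only [Finset.notMem_empty, false_iff]
    omega

lemma phi_inj (m k : ℕ) : Set.InjOn (phi m) (Fpar m k : Set (Σ _ : ℕ, (Fin m ⊕ Fin 2) →₀ ℕ)) := by
  rintro ⟨r, a⟩ h1 ⟨r', a'⟩ h2 h
  rw [Finset.mem_coe, mem_Fpar] at h1 h2
  have hZ : phiZ m ⟨r, a⟩ = phiZ m ⟨r', a'⟩ := by
    funext l
    have := congrFun h l
    simp only [phi] at this
    exact_mod_cast this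
  have hl := congrFun hZ (Fin.last m)
  have hc : ∀ i : Fin m, _ := fun i => congrFun hZ i.castSucc
  simp only [phiZ, Fin.snoc_last, Fin.snoc_castSucc] at hl hc
  have hl' : (m+3) * a (Sum.inr 1) + r = (m+3) * a' (Sum.inr 1) + r' := by exact_mod_cast hl
  have hr : r = r' := by
    have := congrArg (· % (m+3)) hl'
    simpa [Nat.mul_add_mod, Nat.mod_eq_of_lt h1.1, Nat.mod_eq_of_lt h2.1] using this
  subst hr
  have hq : a (Sum.inr 1) = a' (Sum.inr 1) := by
    have : (m+3) * a (Sum.inr 1) = (m+3) * a' (Sum.inr 1) := by omega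
    exact Nat.eq_of_mul_eq_mul_left (by omega) this
  have hi : ∀ i, a (Sum.inl i) = a' (Sum.inl i) := fun i => by
    have := hc i
    rw [hq] at this
    omega
  have h0 : a (Sum.inr 0) = a' (Sum.inr 0) := by
    have e1 := h1.2
    have e2 := h2.2
    simp only [hi, hq] at e1
    omega
  have : a = a' := by
    ext t
    rcases t with i | t
    · exact hi i
    · fin_cases t
      · exact h0
      · exact hq
  rw [this]

lemma phi_image (m k : ℕ) : latPts (dil k (Pint (m+1))) =
    phi m '' (Fpar m k : Set (Σ _ : ℕ, (Fin m ⊕ Fin 2) →₀ ℕ)) := by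
  rw [dil_eq]
  have hm0 : (0:ℤ) ≤ m := Int.natCast_nonneg m
  ext x
  constructor
  · rintro ⟨hQ, hl⟩
    choose z hz using hl
    obtain ⟨h1, h2, h3⟩ := (int_form m k x z hz).1 (by exact_mod_cast hQ)
    obtain ⟨j, hj⟩ := Int.eq_ofNat_of_zero_le h1
    rw [hj] at h2 h3
    have hdm : (m+3) * (j / (m+3)) + j % (m+3) = j := Nat.div_add_mod _ _
    have hrlt : j % (m+3) < m + 3 := Nat.mod_lt _ (by omega)
    set q := j / (m+3) with hq
    set r := j % (m+3) with hr
    have hdm' : ((m:ℤ)+3) * q + r = j := by exact_mod_cast hdm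
    have hrlt' : (r:ℤ) < m + 3 := by exact_mod_cast hrlt
    have hr0 : (0:ℤ) ≤ r := Int.natCast_nonneg r
    have hc : ∀ i : Fin m, ∃ c : ℕ, z i.castSucc - j + q = c := fun i => by
      apply Int.eq_ofNat_of_zero_le
      have := h2 i
      by_contra hcon
      have : z i.castSucc - j + q ≤ -1 := by omega
      nlinarith
    choose c hc using hc
    have hS : ∑ i : Fin m, (z i.castSucc - (j:ℤ)) = (∑ i, (c i:ℤ)) - m * q := by
      have : ∀ i : Fin m, z i.castSucc - (j:ℤ) = c i - q := fun i => by have := hc i; omega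
      simp [this]
    have h3' : 0 ≤ ((m:ℤ)+3) * (k - (∑ i, (c i:ℤ)) - q - r) + 2 * r := by
      have hS' := hS
      rw [hS, ← hdm'] at h3
      linarith
    have hdeg : 0 ≤ (k:ℤ) - (∑ i, (c i:ℤ)) - q - bdeg m r := by
      unfold bdeg
      by_contra hcon
      split_ifs at hcon with h
      · have : (k:ℤ) - (∑ i, (c i:ℤ)) - q - r ≤ -1 := by omega
        have h' : 2 * (r:ℤ) < m + 3 := by exact_mod_cast h
        nlinarith
      · have : (k:ℤ) - (∑ i, (c i:ℤ)) - q - r ≤ -2 := by omega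
        nlinarith
    obtain ⟨c0, hc0⟩ := Int.eq_ofNat_of_zero_le hdeg
    refine ⟨⟨r, Finsupp.equivFunOnFinite.symm (Sum.elim c ![c0, q])⟩, ?_, ?_⟩
    · rw [Finset.mem_coe, mem_Fpar]
      refine ⟨hrlt, ?_⟩
      simp
      zify
      omega
    · funext l
      rw [phi, hz]
      congr 1
      refine Fin.lastCases ?_ (fun i => ?_) l
      · simp [phiZ, hj]; exact hdm'
      · simp [phiZ]
        have := hc i
        linarith
  · rintro ⟨⟨r, a⟩, h, rfl⟩
    rw [Finset.mem_coe, mem_Fpar] at h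
    obtain ⟨hr, hs⟩ := h
    refine ⟨?_, fun l => ⟨phiZ m ⟨r, a⟩ l, rfl⟩⟩
    have := (int_form m k (phi m ⟨r, a⟩) (phiZ m ⟨r, a⟩) (fun _ => rfl)).2
    rw [Int.cast_natCast] at this
    refine this ?_
    simp only [phiZ, Fin.snoc_last, Fin.snoc_castSucc]
    refine ⟨by positivity, fun i => ?_, ?_⟩
    · have e : ((m:ℤ) + 3) * ((a (Sum.inl i)) + (m + 2) * (a (Sum.inr 1)) + r - ((m + 3) * (a (Sum.inr 1)) + r)) +
        ((m + 3) * (a (Sum.inr 1)) + r) = (m+3) * a (Sum.inl i) + r := by ring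
      rw [e]; positivity
    · have e : ∑ i : Fin m, ((a (Sum.inl i) : ℤ) + (m + 2) * (a (Sum.inr 1)) + r - ((m + 3) * (a (Sum.inr 1)) + r))
        = (∑ i, (a (Sum.inl i) : ℤ)) - m * a (Sum.inr 1) := by
        have : ∀ i : Fin m, ((a (Sum.inl i) : ℤ) + (m + 2) * (a (Sum.inr 1)) + r - ((m + 3) * (a (Sum.inr 1)) + r))
          = a (Sum.inl i) - a (Sum.inr 1) := fun i => by ring
        simp only [this]
        simp
      rw [e]
      have hs' : (k:ℤ) = (∑ i, (a (Sum.inl i) : ℤ)) + a (Sum.inr 0) + a (Sum.inr 1) + bdeg m r := by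
        rw [← hs]; push_cast; ring
      rw [hs']
      have e2 : ((m:ℤ)+3) * ((∑ i, (a (Sum.inl i) : ℤ)) + a (Sum.inr 0) + a (Sum.inr 1) + bdeg m r -
          ((∑ i, (a (Sum.inl i) : ℤ)) - m * a (Sum.inr 1)) - ((m+3) * a (Sum.inr 1) + r)) +
          2 * ((m+3) * a (Sum.inr 1) + r) = (m+3) * a (Sum.inr 0) + ((m+3) * (bdeg m r - r) + 2 * r) := by ring
      rw [e2]
      have h0 : (0:ℤ) ≤ (m+3) * (bdeg m r - r) + 2 * r := by
        unfold bdeg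
        split_ifs with h
        · simp
        · have : ((r - 1 : ℕ) : ℤ) = r - 1 := by omega
          rw [this]
          have : (m:ℤ) + 3 ≤ 2 * r := by push Not at h; exact_mod_cast h
          linarith
      positivity

open PowerSeries in
lemma coeff_geom (m n : ℕ) : coeff n ((mk 1 : ℤ⟦X⟧) ^ (m+2)) =
    ((Finset.finsuppAntidiag (Finset.univ : Finset (Fin m ⊕ Fin 2)) n).card : ℤ) := by
  have : (mk 1 : ℤ⟦X⟧) ^ (m+2) = ∏ _i : Fin m ⊕ Fin 2, (mk 1 : ℤ⟦X⟧) := by simp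
  rw [this, coeff_prod]
  simp

open PowerSeries in
lemma ehr_series (m : ℕ) : (mk fun k => (ehr (Pint (m+1)) k : ℤ)) =
    (∑ r ∈ Finset.range (m+3), (X : ℤ⟦X⟧) ^ bdeg m r) * (mk 1 : ℤ⟦X⟧) ^ (m+2) := by
  ext k
  rw [coeff_mk, ehr, phi_image, (phi_inj m k).ncard_image, Set.ncard_coe_finset,
    Fpar, Finset.card_sigma, Finset.sum_mul, map_sum]
  push_cast
  apply Finset.sum_congr rfl
  intro r _
  rw [coeff_X_pow_mul']
  split_ifs
  · rw [coeff_geom]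
  · simp

open PowerSeries in
lemma coeff_one_sub_pow (N j : ℕ) : coeff j ((1 - X : ℤ⟦X⟧) ^ N) = (-1)^j * (N.choose j) := by
  have : (1 - X : ℤ⟦X⟧) ^ N = ∑ i ∈ Finset.range (N+1), C ((-1)^i * (N.choose i : ℤ)) * X ^ i := by
    rw [sub_eq_add_neg, add_comm, add_pow]
    apply Finset.sum_congr rfl
    intro i _
    rw [neg_pow]; simp; ring
  rw [this, map_sum]
  simp only [coeff_C_mul, coeff_X_pow, mul_ite, mul_one, mul_zero]
  rw [Finset.sum_ite_eq]
  split_ifs with h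
  · rfl
  · rw [Finset.mem_range] at h
    rw [Nat.choose_eq_zero_of_lt (by omega)]; simp

open PowerSeries in
lemma delta_eq (m i : ℕ) : deltaVec (Pint (m+1)) (m+1) i =
    ∑ r ∈ Finset.range (m+3), if i = bdeg m r then 1 else 0 := by
  have h : (1 - X : ℤ⟦X⟧) ^ (m+2) * (mk fun k => (ehr (Pint (m+1)) k : ℤ)) =
      ∑ r ∈ Finset.range (m+3), (X : ℤ⟦X⟧) ^ bdeg m r := by
    rw [ehr_series, mul_comm, mul_assoc, ← mul_pow, mk_one_mul_one_sub_eq_one, one_pow, mul_one]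
  have h2 := congrArg (coeff i) h
  rw [coeff_mul, Finset.Nat.sum_antidiagonal_eq_sum_range_succ_mk, map_sum] at h2
  simp only [coeff_X_pow, coeff_one_sub_pow, coeff_mk] at h2
  rw [← h2]
  rfl

lemma delta_ne (m : ℕ) : deltaVec (Pint (m+1)) (m+1) (m+1) ≠ 0 := by
  rw [delta_eq]
  apply ne_of_gt
  apply Finset.sum_pos'
  · intro r _; split_ifs <;> norm_num
  · refine ⟨m+2, by simp, ?_⟩
    have : m + 1 = bdeg m (m+2) := by unfold bdeg; split_ifs <;> omega
    rw [if_pos this]; norm_num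

end pint_helpers

/-- `(1,…,1)` is an interior lattice point of `P` (so `μ_Ehr(P) = d`),
while `Box(P)` is the single point `(b+1,…,b+1)` of degree `b = ⌊(d+1)/2⌋`,
so `μ_hole(P) = ⌊(d+1)/2⌋ < d = μ_Ehr(P)`. -/
theorem interior_point_and_box_of_Pint (d : ℕ) (hd : 3 ≤ d) :
    ((fun _ => (1:ℝ) : Pt d) ∈ interior (Pint d)) ∧ IsLat (fun _ => (1:ℝ) : Pt d) ∧
    IsGreatest {i : ℕ | i ≤ d ∧ deltaVec (Pint d) d i ≠ 0} d ∧
    boxP (Pint d) d =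
      {(((fun _ => (((d+1)/2 : ℕ) : ℝ) + 1) : Pt d), (((d+1)/2 : ℕ) : ℝ))} ∧
    IsGreatest {t : ℝ | ∃ p ∈ boxP (Pint d) d, p.2 = t} (((d+1)/2 : ℕ) : ℝ) ∧
    (d+1)/2 < d := by
  obtain ⟨m, rfl⟩ : ∃ m, d = m + 1 := ⟨d - 1, by omega⟩
  have hm : 2 ≤ m := by omega
  have hbox := box_eq m hm
  refine ⟨u_interior m, fun _ => ⟨1, by simp⟩, ⟨⟨le_rfl, delta_ne m⟩, fun i hi => hi.1⟩, hbox, ?_, by omega⟩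
  rw [hbox]
  exact ⟨⟨gpt m, rfl, rfl⟩, by rintro t ⟨p, rfl, rfl⟩; exact le_rfl⟩
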